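/- arXiv:2011.14047 — 2 statements merged into one kernel-verified Lean document; each statement's English description precedes it below -/
import Mathlib

section
/- Let N be a positive integer, M ⊆ {1,…,N} a set of missing-feature indices, and let x, x̂ ∈ ℝ^N satisfy x̂_n = x_n for every n ∉ M. Let w ∈ ℝ^N and b ∈ ℝ. If |⟨w, x̂⟩ + b| > |∑_{n ∈ M} w_n (x_n − x̂_n)|, then (⟨w, x⟩ + b)·(⟨w, x̂⟩ + b) > 0; that is, the classifier assigns x and its reconstruction x̂ the same strict sign, so x is classified in the same class as x̂. -/
/-- Two-class combined formulation of Lemma 1: if the reconstruction `x̂`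
matches `x` on all observed (non-missing) features and the classifier margin
`|⟨w, x̂⟩ + b|` strictly dominates the inner product of the weights with the
reconstruction error on the missing features, then `x` and `x̂` get the same
strict classification sign. -/
theorem lemma1_two_class (N : ℕ) (hN : 0 < N) (M : Finset (Fin N))
    (x xhat : Fin N → ℝ) (hobs : ∀ n, n ∉ M → xhat n = x n)
    (w : Fin N → ℝ) (b : ℝ)
    (hmargin : |(∑ n, w n * xhat n) + b| > |∑ n ∈ M, w n * (x n - xhat n)|) :
    ((∑ n, w n * x n) + b) * ((∑ n, w n * xhat n) + b) > 0 := by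
  have hsum : ∑ n ∈ M, w n * (x n - xhat n) = ∑ n, w n * x n - ∑ n, w n * xhat n := by
    rw [← Finset.sum_sub_distrib, Finset.sum_subset (Finset.subset_univ M)
      fun n _ hn => by rw [hobs n hn, sub_self, mul_zero]]
    exact Finset.sum_congr rfl fun n _ => mul_sub _ _ _
  rw [hsum] at hmargin
  have hsq := sq_lt_sq.mpr hmargin
  nlinarith [sq_nonneg (∑ n, w n * x n + b)]
end

section
/- Let L ≥ 1 and let an L-layer ReLU network on ℝ^{N₀} be given by matrices W_l ∈ ℝ^{N_{l−1}×N_l}, biases B_l ∈ ℝ^{N_l} (l = 1,…,L), readout w ∈ ℝ^{N_L}, b ∈ ℝ, with decision function f as defined below, and set A = ‖w‖ · ∏_{l=2}^{L} ‖W_l‖₂. Let M ⊆ {1,…,N₀} be a set of missing-feature indices and let x, x̂ ∈ ℝ^{N₀} satisfy x̂_n = x_n for every n ∉ M; set e = x − x̂ (so e is supported on M). If for some ε > 0 one has f(x̂) > ε and ε ≥ A · ‖W₁ᵀ e‖, then f(x) > 0. -/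
open Matrix

/-- The Euclidean norm of a finitely-indexed real vector. -/
noncomputable def euclNorm {ι : Type*} [Fintype ι] (v : ι → ℝ) : ℝ :=
  Real.sqrt (∑ j, (v j) ^ 2)

/-- The operator (spectral) norm of the linear map `z ↦ Wᵀz` with respect to
Euclidean norms. -/
noncomputable def specNorm {p q : ℕ} (W : Matrix (Fin p) (Fin q) ℝ) : ℝ :=
  ‖LinearMap.toContinuousLinearMap
      (Matrix.toEuclideanLin (Wᵀ) :
        EuclideanSpace ℝ (Fin p) →ₗ[ℝ] EuclideanSpace ℝ (Fin q))‖

/-- Layer outputs of an `L`-layer ReLU network: `x^(0) = x` and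
`x^(l) = ReLU(Wₗᵀ x^(l-1) + Bₗ)`, where (because of 0-based indexing) the
paper's `W_l, B_l` are `W (l-1), B (l-1)` here, and ReLU is applied
entrywise as `t ↦ max t 0`. -/
def layerOut (N : ℕ → ℕ) (W : ∀ l, Matrix (Fin (N l)) (Fin (N (l + 1))) ℝ)
    (B : ∀ l, Fin (N (l + 1)) → ℝ) (x : Fin (N 0) → ℝ) :
    ∀ l, Fin (N l) → ℝ
  | 0 => x
  | l + 1 => fun j => max (((W l)ᵀ.mulVec (layerOut N W B x l)) j + B l j) 0

theorem euclNorm_nonneg {ι : Type*} [Fintype ι] (v : ι → ℝ) : 0 ≤ euclNorm v :=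
  Real.sqrt_nonneg _

theorem euclNorm_eq_norm_toLp {ι : Type*} [Fintype ι] (v : ι → ℝ) :
    euclNorm v = ‖WithLp.toLp 2 v‖ := by
  simp [euclNorm, EuclideanSpace.norm_eq]

theorem euclNorm_mono {ι : Type*} [Fintype ι] {u v : ι → ℝ} (h : ∀ j, |u j| ≤ |v j|) :
    euclNorm u ≤ euclNorm v :=
  Real.sqrt_le_sqrt (Finset.sum_le_sum fun j _ => sq_le_sq.mpr (h j))

theorem euclNorm_transpose_mulVec_le {p q : ℕ} (W : Matrix (Fin p) (Fin q) ℝ) (v : Fin p → ℝ) :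
    euclNorm (Wᵀ.mulVec v) ≤ specNorm W * euclNorm v := by
  rw [euclNorm_eq_norm_toLp, euclNorm_eq_norm_toLp]
  exact (LinearMap.toContinuousLinearMap (Matrix.toEuclideanLin Wᵀ)).le_opNorm (WithLp.toLp 2 v)

/-- Each layer is an entrywise nonexpansive function of its linear preactivation. -/
theorem euclNorm_layerOut_succ_sub_le (N : ℕ → ℕ)
    (W : ∀ l, Matrix (Fin (N l)) (Fin (N (l + 1))) ℝ)
    (B : ∀ l, Fin (N (l + 1)) → ℝ) (x y : Fin (N 0) → ℝ) (l : ℕ) :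
    euclNorm (layerOut N W B x (l + 1) - layerOut N W B y (l + 1)) ≤
      euclNorm ((W l)ᵀ.mulVec (layerOut N W B x l - layerOut N W B y l)) := by
  refine euclNorm_mono fun j => ?_
  rw [Matrix.mulVec_sub]
  simpa [layerOut] using abs_max_sub_max_le_abs
    (((W l)ᵀ.mulVec (layerOut N W B x l)) j + B l j)
    (((W l)ᵀ.mulVec (layerOut N W B y l)) j + B l j) 0

theorem euclNorm_layerOut_sub_le (N : ℕ → ℕ)
    (W : ∀ l, Matrix (Fin (N l)) (Fin (N (l + 1))) ℝ)
    (B : ∀ l, Fin (N (l + 1)) → ℝ) (x y : Fin (N 0) → ℝ) {L : ℕ} (hL : 1 ≤ L) :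
    euclNorm (layerOut N W B x L - layerOut N W B y L) ≤
      (∏ l ∈ Finset.Ico 1 L, specNorm (W l)) * euclNorm ((W 0)ᵀ.mulVec (x - y)) := by
  induction L, hL using Nat.le_induction with
  | base => simpa [layerOut] using euclNorm_layerOut_succ_sub_le N W B x y 0
  | succ k hk ih =>
    rw [Finset.prod_Ico_succ_top hk, mul_comm (∏ l ∈ Finset.Ico 1 k, specNorm (W l)), mul_assoc]
    exact (euclNorm_layerOut_succ_sub_le N W B x y k).trans <|
      (euclNorm_transpose_mulVec_le _ _).trans <|
        mul_le_mul_of_nonneg_left ih (norm_nonneg _)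

theorem abs_sum_mul_le_euclNorm_mul {ι : Type*} [Fintype ι] (u v : ι → ℝ) :
    |∑ j, u j * v j| ≤ euclNorm u * euclNorm v := by
  rw [euclNorm, euclNorm, ← Real.sqrt_mul (Finset.sum_nonneg fun j _ => sq_nonneg (u j))]
  exact Real.abs_le_sqrt (Finset.sum_mul_sq_le_sq_mul_sq _ u v)

/-- The positive-class case of Proposition 2 (multilayer-perceptron sufficient
condition): if the reconstruction `x̂` matches `x` on all observed
(non-missing) features and the margin `ε` dominates `A·‖W₁ᵀe‖` with
`A = ‖w‖·∏_{l=2}^L ‖Wₗ‖₂` and `e = x − x̂`, then the ReLU network classifies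
`x` in the same (positive) class as `x̂`. -/
theorem prop2_pos (L : ℕ) (hL : 1 ≤ L) (N : ℕ → ℕ)
    (W : ∀ l, Matrix (Fin (N l)) (Fin (N (l + 1))) ℝ)
    (B : ∀ l, Fin (N (l + 1)) → ℝ)
    (w : Fin (N L) → ℝ) (b : ℝ)
    (f : (Fin (N 0) → ℝ) → ℝ)
    (hf : ∀ x, f x = (∑ j, w j * layerOut N W B x L j) + b)
    (A : ℝ) (hA : A = euclNorm w * ∏ l ∈ Finset.Ico 1 L, specNorm (W l))
    (M : Finset (Fin (N 0))) (x xhat : Fin (N 0) → ℝ)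
    (hobs : ∀ n, n ∉ M → xhat n = x n)
    (e : Fin (N 0) → ℝ) (he : e = x - xhat)
    (ε : ℝ) (hε : 0 < ε)
    (hsep : f xhat > ε)
    (herr : ε ≥ A * euclNorm ((W 0)ᵀ.mulVec e)) :
    f x > 0 := by
  have hdiff : f x - f xhat =
      ∑ j, w j * (layerOut N W B x L - layerOut N W B xhat L) j := by
    simp only [hf, Pi.sub_apply, mul_sub, Finset.sum_sub_distrib]
    ring
  have hbound : |f x - f xhat| ≤ A * euclNorm ((W 0)ᵀ.mulVec e) := by
    rw [hdiff, hA, he, mul_assoc]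
    exact (abs_sum_mul_le_euclNorm_mul _ _).trans <|
      mul_le_mul_of_nonneg_left (euclNorm_layerOut_sub_le N W B x xhat hL) (euclNorm_nonneg w)
  linarith [(abs_le.mp hbound).1]
end
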